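/- If the conjectured coarse Menger theorem with relaxed separator size holds, then necessarily n ≥ ⌊3k/2⌋: there exist, for every r ≥ 1 and ℓ > 0, a graph G and sets S, T ⊆ V(G) such that G does not contain 2r+1 paths between S and T pairwise at distance at least three, yet for every set X ⊆ V(G) with |X| ≤ 3r−1 there is an S–T path whose every vertex has distance more than ℓ from every member of X. -/

import Mathlib

/-- The distance in `G` between vertex sets `A` and `B` is at least `d`:
every walk from `A` to `B` has length at least `d`. -/
def SetDistGE {V : Type} (G : SimpleGraph V) (A B : Set V) (d : ℕ) : Prop :=
  ∀ ⦃x y : V⦄, x ∈ A → y ∈ B → ∀ w : G.Walk x y, d ≤ w.length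

/-- The distance in `G` between `x` and `y` is at most `ℓ`. -/
def DistLE {V : Type} (G : SimpleGraph V) (x y : V) (ℓ : ℕ) : Prop :=
  ∃ w : G.Walk x y, w.length ≤ ℓ

/-- `P` is the vertex set of a path of `G` with one end in `S` and one end in `T`. -/
def IsSTPath {V : Type} (G : SimpleGraph V) (S T : Set V) (P : Set V) : Prop :=
  ∃ (u v : V) (w : G.Walk u v), w.IsPath ∧ u ∈ S ∧ v ∈ T ∧ P = {x | x ∈ w.support}

/-- There are `k` paths between `S` and `T`, pairwise at distance at least `d`. -/
def HasKPaths {V : Type} (G : SimpleGraph V) (S T : Set V) (k d : ℕ) : Prop :=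
  ∃ P : Fin k → Set V, (∀ i, IsSTPath G S T (P i)) ∧
    ∀ i j, i ≠ j → SetDistGE G (P i) (P j) d

/-- There is a set `X` of at most `m` vertices such that every path between `S` and `T`
contains a vertex with distance at most `ℓ` from some member of `X`. -/
def CoarseSeparator {V : Type} (G : SimpleGraph V) (S T : Set V) (m ℓ : ℕ) : Prop :=
  ∃ X : Finset V, X.card ≤ m ∧
    ∀ (u v : V) (w : G.Walk u v), w.IsPath → u ∈ S → v ∈ T →
      ∃ y ∈ w.support, ∃ x ∈ X, DistLE G x y ℓ
/-!
A block is a piece of the graph that is entered on the left through two terminals and left on the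
right through two terminals, and is attached to the rest of the tree at its apex. Call it rigid if,
whenever a set containing the outer left terminal crosses it and a set at distance at least three
leads from the left terminals to the apex or to the right, the first set contains the apex, and
likewise with left and right exchanged. Of two far crossing sets of a rigid block, one then contains
both outer terminals and the apex. Hence two blocks glued along two terminals, which are the outer
terminal of one and the inner terminal of the other, form a rigid block with the parent of their
apexes as apex: if the two apexes were in different sets these would be at distance two, and if
they were in the same set it would cover both shared terminals. So no two far paths cross the whole
bottom without meeting the root, which allows at most two pairwise far paths.

Three balls are needed because of four paths: the root alone, the bottom path, the path through the
even legs and the path through the odd legs. A ball at the root stays away from the bottom, and the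
1-Lipschitz functions `height` and `wave` show that no ball meets the three others: near the bottom
path, `wave` is `-(ℓ + 1)` on the even legs and `ℓ + 1` on the odd ones.

Both properties pass to disjoint copies by the pigeonhole principle.
-/

section Distance

variable {V : Type} {G : SimpleGraph V} {A B : Set V} {d ℓ : ℕ} {x y z : V}

theorem SetDistGE.symm (h : SetDistGE G A B d) : SetDistGE G B A d :=
  fun _ _ hx hy w => by simpa only [SimpleGraph.Walk.length_reverse] using h hy hx w.reverse

theorem SetDistGE.notMem (h : SetDistGE G A B (d + 1)) (hx : x ∈ A) : x ∉ B :=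
  fun hx' => by simpa using h hx hx' .nil

theorem SetDistGE.not_adj (h : SetDistGE G A B (d + 2)) (hx : x ∈ A) (hy : y ∈ B) :
    ¬ G.Adj x y :=
  fun hxy => by simpa using h hx hy hxy.toWalk

theorem SetDistGE.not_adj_of_adj (h : SetDistGE G A B (d + 3)) (hx : x ∈ A) (hy : y ∈ B)
    (hxz : G.Adj x z) : ¬ G.Adj y z :=
  fun hyz => by simpa using h hx hy (.cons hxz hyz.symm.toWalk)

theorem DistLE.symm (h : DistLE G x y ℓ) : DistLE G y x ℓ :=
  h.elim fun w hw => ⟨w.reverse, w.length_reverse.trans_le hw⟩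

theorem DistLE.trans {ℓ' : ℕ} (hxy : DistLE G x y ℓ) (hyz : DistLE G y z ℓ') :
    DistLE G x z (ℓ + ℓ') := by
  obtain ⟨w, hw⟩ := hxy
  obtain ⟨w', hw'⟩ := hyz
  exact ⟨w.append w', by rw [SimpleGraph.Walk.length_append]; lia⟩

theorem DistLE.abs_sub_le {f : V → ℤ} (hf : ∀ x y, G.Adj x y → |f x - f y| ≤ 1)
    (h : DistLE G x y ℓ) : |f x - f y| ≤ ℓ := by
  obtain ⟨w, hw⟩ := h
  have hlen : |f x - f y| ≤ w.length := by
    clear hw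
    induction w with
    | nil => simp
    | cons hadj w ih =>
      grw [_root_.abs_sub_le _ _ _, hf _ _ hadj, ih]
      simp [add_comm]
  exact hlen.trans (mod_cast hw)

theorem abs_sub_le_two_mul_of_distLE {f : V → ℤ} (hf : ∀ x y, G.Adj x y → |f x - f y| ≤ 1)
    (hx : DistLE G z x ℓ) (hy : DistLE G z y ℓ) : |f x - f y| ≤ 2 * ℓ :=
  ((hx.symm.trans hy).abs_sub_le hf).trans_eq (by push_cast; ring)

end Distance

namespace CoarseMenger

open SimpleGraph

section Connectivity

variable {V : Type*} {G : SimpleGraph V} {X Y A D P Q S T : Set V} {p q s : V}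

/-- `p` and `q` are joined by a walk of `G` all of whose vertices lie in `X`. -/
def ReachableIn (G : SimpleGraph V) (X : Set V) (p q : V) : Prop :=
  ∃ w : G.Walk p q, ∀ x ∈ w.support, x ∈ X

theorem ReachableIn.left_mem (h : ReachableIn G X p q) : p ∈ X :=
  h.elim fun w hw => hw p w.start_mem_support

theorem ReachableIn.right_mem (h : ReachableIn G X p q) : q ∈ X :=
  h.elim fun w hw => hw q w.end_mem_support

theorem ReachableIn.refl (hp : p ∈ X) : ReachableIn G X p p :=
  ⟨.nil, by simpa using hp⟩

theorem ReachableIn.symm (h : ReachableIn G X p q) : ReachableIn G X q p :=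
  h.elim fun w hw => ⟨w.reverse, by simpa using hw⟩

theorem ReachableIn.trans (h : ReachableIn G X p q) (h' : ReachableIn G X q s) :
    ReachableIn G X p s := by
  obtain ⟨w, hw⟩ := h
  obtain ⟨w', hw'⟩ := h'
  refine ⟨w.append w', fun x hx => ?_⟩
  exact ((Walk.mem_support_append_iff w w').mp hx).elim (hw x) (hw' x)

theorem ReachableIn.mono (hXY : X ⊆ Y) (h : ReachableIn G X p q) : ReachableIn G Y p q :=
  h.elim fun w hw => ⟨w, fun x hx => hXY (hw x hx)⟩

theorem ReachableIn.of_adj (hp : p ∈ X) (hq : q ∈ X) (h : G.Adj p q) : ReachableIn G X p q :=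
  ⟨h.toWalk, by simp [hp, hq]⟩

theorem ReachableIn.iterate {f : ℕ → V} {n : ℕ} (h₀ : f 0 ∈ X)
    (h : ∀ i < n, ReachableIn G X (f i) (f (i + 1))) : ReachableIn G X (f 0) (f n) := by
  induction n with
  | zero => exact .refl h₀
  | succ n ih => exact (ih fun i hi => h i (by lia)).trans (h n n.lt_succ_self)

theorem ReachableIn.exists_isPath (h : ReachableIn G X p q) :
    ∃ w : G.Walk p q, w.IsPath ∧ ∀ x ∈ w.support, x ∈ X := by
  classical
  obtain ⟨w, hw⟩ := h
  exact ⟨w.bypass, w.bypass_isPath, fun x hx => hw x (w.support_bypass_subset_support hx)⟩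

theorem ReachableIn.exists_mem_of_exits (h : ReachableIn G X p q) (hp : p ∈ A)
    (hq : q ∈ A → q ∈ D) (hA : ∀ x ∈ A, x ∉ D → ∀ y ∈ X, G.Adj x y → y ∈ A) :
    ∃ r ∈ D, ReachableIn G (X ∩ A) p r := by
  obtain ⟨w, hw⟩ := h
  induction w with
  | @nil p => exact ⟨p, hq hp, .refl ⟨hw p (by simp), hp⟩⟩
  | @cons p p' q hadj w ih =>
    simp only [Walk.support_cons, List.mem_cons, forall_eq_or_imp] at hw
    by_cases hpD : p ∈ D
    · exact ⟨p, hpD, .refl ⟨hw.1, hp⟩⟩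
    · have hp' : p' ∈ A := hA p hp hpD p' (hw.2 p' w.start_mem_support) hadj
      obtain ⟨r, hr, hreach⟩ := ih hp' hq hw.2
      have hstep : ReachableIn G (X ∩ A) p p' := .of_adj ⟨hw.1, hp⟩ hreach.left_mem hadj
      exact ⟨r, hr, hstep.trans hreach⟩

/-- Some walk of `G` inside `X` leads from `P` to `Q`. -/
def Connects (G : SimpleGraph V) (X P Q : Set V) : Prop :=
  ∃ p ∈ P, ∃ q ∈ Q, ReachableIn G X p q

theorem Connects.symm (h : Connects G X P Q) : Connects G X Q P := by
  obtain ⟨p, hp, q, hq, h⟩ := h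
  exact ⟨q, hq, p, hp, h.symm⟩

theorem Connects.mono (hPQ : ∀ x ∈ X, x ∈ P → x ∈ S) (hQT : ∀ x ∈ X, x ∈ Q → x ∈ T)
    (h : Connects G X P Q) : Connects G X S T := by
  obtain ⟨p, hp, q, hq, h⟩ := h
  exact ⟨p, hPQ p h.left_mem hp, q, hQT q h.right_mem hq, h⟩

theorem Connects.exists_mem_left (h : Connects G (X ∩ Y) P Q) : ∃ p ∈ P, p ∈ X := by
  obtain ⟨p, hp, _, _, h⟩ := h
  exact ⟨p, hp, h.left_mem.1⟩

theorem Connects.exits (h : Connects G (X ∩ Y) P Q) (hP : P ⊆ A) (hQ : ∀ q ∈ Q, q ∈ A → q ∈ D)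
    (hA : ∀ x ∈ A, x ∉ D → ∀ y ∈ X, y ∈ Y → G.Adj x y → y ∈ A) : Connects G (X ∩ A) P D := by
  obtain ⟨p, hp, q, hq, h⟩ := h
  obtain ⟨r, hr, h⟩ := h.exists_mem_of_exits (hP hp) (hQ q hq)
    fun x hx hxD y hy => hA x hx hxD y hy.1 hy.2
  exact ⟨p, hp, r, hr, h.mono fun x hx => ⟨hx.1.1, hx.2⟩⟩

theorem _root_.CoarseSeparator.exists_distLE {V : Type} {G : SimpleGraph V} {S T : Set V}
    {m ℓ : ℕ} (h : CoarseSeparator G S T m ℓ) :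
    ∃ C : Finset V, C.card ≤ m ∧ ∀ (X : Set V) (u v : V), u ∈ S → v ∈ T →
      ReachableIn G X u v → ∃ c ∈ C, ∃ x ∈ X, DistLE G c x ℓ := by
  obtain ⟨C, hC, hsep⟩ := h
  refine ⟨C, hC, fun X u v hu hv hX => ?_⟩
  obtain ⟨w, hw, hwX⟩ := hX.exists_isPath
  obtain ⟨x, hx, c, hc, hcx⟩ := hsep u v w hw hu hv
  exact ⟨c, hc, x, hwX x hx, hcx⟩

end Connectivity

section Copies

variable {ι V : Type} {G : SimpleGraph V} {S T : Set V} {m n d ℓ : ℕ}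

/-- The disjoint union of copies of `G` indexed by `ι`. -/
abbrev copies (ι : Type) (G : SimpleGraph V) : SimpleGraph (ι × V) :=
  (⊥ : SimpleGraph ι) □ G

theorem fst_eq_of_walk_copies {p q : ι × V} (w : (copies ι G).Walk p q) : p.1 = q.1 :=
  reachable_bot.mp (reachable_boxProd.mp w.reachable).1

theorem exists_walk_snd {p q : ι × V} (w : (copies ι G).Walk p q) :
    ∃ w' : G.Walk p.2 q.2, w'.length = w.length ∧ w'.support = w.support.map Prod.snd :=
  let f : copies ι G →g G :=
    { toFun := Prod.snd
      map_rel' := fun h => (boxProd_adj.mp h).elim (fun h' => h'.1.elim) fun h' => h'.1 }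
  ⟨w.map f, w.length_map f, w.support_map f⟩

theorem exists_walk_mk (c : ι) {u v : V} (w : G.Walk u v) :
    ∃ w' : (copies ι G).Walk (c, u) (c, v),
      w'.length = w.length ∧ w'.support = w.support.map (Prod.mk c) :=
  let f := (boxProdRight (⊥ : SimpleGraph ι) G c).toHom
  ⟨w.map f, w.length_map f, w.support_map f⟩

theorem _root_.IsSTPath.of_copies {P : Set (ι × V)} {p : ι × V} (hp : p ∈ P)
    (hP : IsSTPath (copies ι G) (Set.univ ×ˢ S) (Set.univ ×ˢ T) P) :
    IsSTPath G S T {x | (p.1, x) ∈ P} := by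
  classical
  obtain ⟨u, v, w, hw, hu, hv, rfl⟩ := hP
  have fst_eq : ∀ q ∈ w.support, q.1 = u.1 := fun q hq =>
    (fst_eq_of_walk_copies (w.takeUntil q hq)).symm
  obtain ⟨w', -, hw'⟩ := exists_walk_snd w
  refine ⟨u.2, v.2, w', ?_, hu.2, hv.2, ?_⟩
  · rw [Walk.isPath_def, hw']
    exact hw.support_nodup.map_on fun q hq q' hq' h =>
      Prod.ext ((fst_eq q hq).trans (fst_eq q' hq').symm) h
  · ext x
    simp only [Set.mem_ofPred_eq, hw', List.mem_map]
    exact ⟨fun hx => ⟨_, hx, rfl⟩, fun ⟨q, hq, hqx⟩ =>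
      (Prod.ext ((fst_eq q hq).trans (fst_eq p hp).symm) hqx : q = (p.1, x)) ▸ hq⟩

theorem _root_.SetDistGE.of_copies {A B : Set (ι × V)} (h : SetDistGE (copies ι G) A B d) (c : ι) :
    SetDistGE G {x | (c, x) ∈ A} {x | (c, x) ∈ B} d :=
  fun _ _ hx hy w =>
    let ⟨w', hlen, _⟩ := exists_walk_mk c w
    (h hx hy w').trans_eq hlen

theorem _root_.HasKPaths.of_copies [Fintype ι] (hn : Fintype.card ι * m < n)
    (h : HasKPaths (copies ι G) (Set.univ ×ˢ S) (Set.univ ×ˢ T) n d) :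
    HasKPaths G S T (m + 1) d := by
  classical
  obtain ⟨P, hP, hfar⟩ := h
  have nonempty : ∀ i, ∃ p, p ∈ P i := fun i => by
    obtain ⟨u, v, w, -, -, -, hw⟩ := hP i
    exact ⟨u, hw ▸ w.start_mem_support⟩
  choose p hp using nonempty
  obtain ⟨c, hc⟩ := Fintype.exists_lt_card_fiber_of_mul_lt_card (fun i => (p i).1)
    (by rwa [Fintype.card_fin])
  let e := Finset.orderEmbOfCardLe _ hc
  have he : ∀ i, (p (e i)).1 = c := fun i =>
    (Finset.mem_filter.mp (Finset.orderEmbOfCardLe_mem _ hc i)).2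
  refine ⟨fun i => {x | (c, x) ∈ P (e i)}, fun i => he i ▸ (hP (e i)).of_copies (hp (e i)),
    fun i j hij => (hfar _ _ (e.injective.ne hij)).of_copies c⟩

theorem _root_.CoarseSeparator.of_copies [Fintype ι] (hn : n < Fintype.card ι * (m + 1))
    (h : CoarseSeparator (copies ι G) (Set.univ ×ˢ S) (Set.univ ×ˢ T) n ℓ) :
    CoarseSeparator G S T m ℓ := by
  classical
  obtain ⟨X, hX, hsep⟩ := h
  obtain ⟨c, -, hc⟩ := Finset.exists_card_fiber_lt_of_card_lt_mul (s := X) (t := Finset.univ)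
    (f := Prod.fst) (hX.trans_lt hn)
  refine ⟨(X.filter (·.1 = c)).image Prod.snd, Finset.card_image_le.trans (Nat.lt_succ_iff.mp hc),
    fun u v w hw hu hv => ?_⟩
  obtain ⟨w', -, hw'⟩ := exists_walk_mk c w
  have hpath : w'.IsPath := by
    rw [Walk.isPath_def, hw']
    exact hw.support_nodup.map (Prod.mk_right_injective c)
  obtain ⟨y, hy, x, hx, z, hz⟩ := hsep _ _ w' hpath ⟨trivial, hu⟩ ⟨trivial, hv⟩
  rw [hw', List.mem_map] at hy
  obtain ⟨y, hy, rfl⟩ := hy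
  obtain ⟨z', hz', -⟩ := exists_walk_snd z
  have hxc : x ∈ X.filter (·.1 = c) := Finset.mem_filter.mpr ⟨hx, fst_eq_of_walk_copies z⟩
  exact ⟨y, hy, x.2, Finset.mem_image_of_mem _ hxc, z', hz'.trans_le hz⟩

end Copies

section Blocks

/-- A piece of a graph on the vertex set `V`, to be crossed from the two terminals `outerL` and
`innerL` on its left to the two terminals `innerR` and `outerR` on its right, together with the
vertex `apex` at which it hangs from the rest of the tree. -/
structure Block (V : Type) where
  carrier : Set V
  outerL : V
  innerL : V
  innerR : V
  outerR : V
  apex : V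

variable {V : Type} {G : SimpleGraph V} {B B₁ B₂ : Block V} {b c : Set V}

namespace Block

/-- The terminals on the left. -/
def left (B : Block V) : Set V := {B.outerL, B.innerL}

/-- The terminals on the right. -/
def right (B : Block V) : Set V := {B.outerR, B.innerR}

/-- The mirror image, in which left and right are exchanged. -/
def flip (B : Block V) : Block V where
  carrier := B.carrier
  outerL := B.outerR
  innerL := B.innerR
  innerR := B.innerL
  outerR := B.outerL
  apex := B.apex

/-- Inside the block, `b` leads from the left terminals to the right ones. -/
def Crosses (G : SimpleGraph V) (B : Block V) (b : Set V) : Prop :=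
  Connects G (b ∩ B.carrier) B.left B.right

/-- If `c` crosses the block and contains the outer left terminal, and a set far from `c` leads from
the left terminals to the apex or to the right, then `c` contains the apex. -/
def ForcesApex (G : SimpleGraph V) (B : Block V) : Prop :=
  ∀ ⦃b c : Set V⦄, SetDistGE G b c 3 → B.outerL ∈ c → B.Crosses G c →
    Connects G (b ∩ B.carrier) B.left (insert B.apex B.right) → B.apex ∈ c

/-- The invariant of the construction: outer terminals on either side force the apex. -/
def IsRigid (G : SimpleGraph V) (B : Block V) : Prop :=
  B.ForcesApex G ∧ B.flip.ForcesApex G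

theorem Crosses.flip (h : B.Crosses G b) : B.flip.Crosses G b :=
  Connects.symm h

theorem Crosses.connects_apex (h : B.Crosses G b) :
    Connects G (b ∩ B.carrier) B.left (insert B.apex B.right) :=
  h.mono (fun _ _ hx => hx) fun _ _ hx => .inr hx

theorem Crosses.left_mem (h : B.Crosses G b) : B.outerL ∈ b ∨ B.innerL ∈ b := by
  obtain ⟨x, rfl | rfl, hx⟩ := h.exists_mem_left
  exacts [.inl hx, .inr hx]

theorem IsRigid.flip (h : B.IsRigid G) : B.flip.IsRigid G :=
  h.symm

theorem IsRigid.apex_mem_of_outerL_mem (hB : B.IsRigid G) (hfar : SetDistGE G b c 3)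
    (hb : B.Crosses G b) (hc : B.Crosses G c) (hout : B.outerL ∈ c) : B.apex ∈ c :=
  hB.1 hfar hout hc hb.connects_apex

theorem IsRigid.outerR_mem_of_outerL_mem (hB : B.IsRigid G) (hfar : SetDistGE G b c 3)
    (hb : B.Crosses G b) (hc : B.Crosses G c) (hout : B.outerL ∈ c) : B.outerR ∈ c := by
  have hapex : B.apex ∈ c := hB.apex_mem_of_outerL_mem hfar hb hc hout
  have hb_out : B.outerR ∉ b := fun h =>
    hfar.notMem (hB.flip.apex_mem_of_outerL_mem hfar.symm hc.flip hb.flip h) hapex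
  have hb_inner : B.innerR ∈ b := hb.flip.left_mem.resolve_left hb_out
  exact hc.flip.left_mem.resolve_right (hfar.notMem hb_inner)

theorem IsRigid.apex_mem_or_apex_mem (hB : B.IsRigid G) (hfar : SetDistGE G b c 3)
    (hb : B.Crosses G b) (hc : B.Crosses G c) : B.apex ∈ b ∨ B.apex ∈ c := by
  rcases hb.left_mem with hout | hinner
  · exact .inl (hB.apex_mem_of_outerL_mem hfar.symm hc hb hout)
  · have hout : B.outerL ∈ c := hc.left_mem.resolve_right (hfar.notMem hinner)
    exact .inr (hB.apex_mem_of_outerL_mem hfar hb hc hout)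

theorem forcesApex_of_exits {A : Set V} (houter : B.outerL ∈ A) (hright : ∀ x ∈ B.right, x ∉ A)
    (hA : ∀ x ∈ A, ∀ y ∈ B.carrier, G.Adj x y → y ∈ A ∨ y = B.innerL ∨ y = B.apex) :
    B.ForcesApex G := by
  intro b c hfar hout hc hb
  have hinner_b : B.innerL ∈ b := by
    obtain ⟨x, rfl | rfl, hx⟩ := hb.exists_mem_left
    exacts [(hfar.notMem hx hout).elim, hx]
  have hinner_c : B.innerL ∉ c := hfar.notMem hinner_b
  by_contra hapex_c
  have hc' : Connects G (c ∩ B.carrier) {B.outerL} B.right := by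
    refine hc.mono ?_ fun _ _ hx => hx
    rintro x hx (rfl | rfl)
    exacts [rfl, (hinner_c hx.1).elim]
  have hstuck : Connects G (c ∩ A) {B.outerL} ∅ := by
    refine hc'.exits (Set.singleton_subset_iff.mpr houter) hright fun x hx _ y hyc hy hxy => ?_
    rcases hA x hx y hy hxy with hyA | rfl | rfl
    exacts [hyA, (hinner_c hyc).elim, (hapex_c hyc).elim]
  obtain ⟨_, _, _, hempty, _⟩ := hstuck
  exact hempty

/-- `B` consists of `B₁`, of `B₂` to the right of it, and of an apex joined to the apexes of both.
The right terminals of `B₁` are the left terminals of `B₂`, with outer and inner exchanged. -/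
structure IsGluing (G : SimpleGraph V) (B₁ B₂ B : Block V) : Prop where
  outerL_eq : B.outerL = B₁.outerL
  innerL_eq : B.innerL = B₁.innerL
  innerR_eq : B.innerR = B₂.innerR
  outerR_eq : B.outerR = B₂.outerR
  outerL_snd : B₂.outerL = B₁.innerR
  innerL_snd : B₂.innerL = B₁.outerR
  carrier_subset : B.carrier ⊆ insert B.apex (B₁.carrier ∪ B₂.carrier)
  inter_subset : B₁.carrier ∩ B₂.carrier ⊆ B₁.right
  adj_mem : ∀ x ∈ B₁.carrier ∪ B₂.carrier, ∀ y ∈ B₁.carrier ∪ B₂.carrier, G.Adj x y →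
    x ∈ B₁.carrier ∧ y ∈ B₁.carrier ∨ x ∈ B₂.carrier ∧ y ∈ B₂.carrier
  left_subset : B.left ⊆ B₁.carrier \ B₂.carrier
  right_subset : B.right ⊆ B₂.carrier \ B₁.carrier
  apex_notMem_fst : B.apex ∉ B₁.carrier
  apex_notMem_snd : B.apex ∉ B₂.carrier
  eq_apex_fst : ∀ x ∈ B₁.carrier, G.Adj x B.apex → x = B₁.apex
  eq_apex_snd : ∀ x ∈ B₂.carrier, G.Adj x B.apex → x = B₂.apex
  adj_apex_fst : G.Adj B₁.apex B.apex
  adj_apex_snd : G.Adj B₂.apex B.apex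

namespace IsGluing

theorem left_eq (h : IsGluing G B₁ B₂ B) : B.left = B₁.left := by
  rw [left, left, h.outerL_eq, h.innerL_eq]

theorem left_snd (h : IsGluing G B₁ B₂ B) : B₂.left = B₁.right := by
  rw [left, right, h.outerL_snd, h.innerL_snd, Set.pair_comm]

theorem flip (h : IsGluing G B₁ B₂ B) : IsGluing G B₂.flip B₁.flip B.flip where
  outerL_eq := h.outerR_eq
  innerL_eq := h.innerR_eq
  innerR_eq := h.innerL_eq
  outerR_eq := h.outerL_eq
  outerL_snd := h.innerL_snd.symm
  innerL_snd := h.outerL_snd.symm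
  carrier_subset := h.carrier_subset.trans_eq (congrArg _ (Set.union_comm _ _))
  inter_subset := fun _ hx => h.left_snd.ge (h.inter_subset hx.symm)
  adj_mem := fun x hx y hy hxy => (h.adj_mem x hx.symm y hy.symm hxy).symm
  left_subset := h.right_subset
  right_subset := h.left_subset
  apex_notMem_fst := h.apex_notMem_snd
  apex_notMem_snd := h.apex_notMem_fst
  eq_apex_fst := h.eq_apex_snd
  eq_apex_snd := h.eq_apex_fst
  adj_apex_fst := h.adj_apex_snd
  adj_apex_snd := h.adj_apex_fst

theorem mem_fst_of_adj (h : IsGluing G B₁ B₂ B) {x y : V} (hx : x ∈ B₁.carrier)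
    (hx_right : x ∉ B₁.right) (hy : y ∈ B.carrier) (hy_apex : y ≠ B.apex) (hxy : G.Adj x y) :
    y ∈ B₁.carrier := by
  have hy' : y ∈ B₁.carrier ∪ B₂.carrier := (h.carrier_subset hy).resolve_left hy_apex
  rcases h.adj_mem x (.inl hx) y hy' hxy with hmem | hmem
  · exact hmem.2
  · exact (hx_right (h.inter_subset ⟨hx, hmem.1⟩)).elim

theorem left_subset_fst (h : IsGluing G B₁ B₂ B) : B.left ⊆ B₁.carrier :=
  fun _ hx => (h.left_subset hx).1

theorem crosses_fst (h : IsGluing G B₁ B₂ B) (hb : B.Crosses G b) (hapex : B.apex ∉ b) :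
    B₁.Crosses G b := by
  rw [Crosses, ← h.left_eq]
  refine hb.exits h.left_subset_fst (fun q hq hq₁ => ((h.right_subset hq).2 hq₁).elim) ?_
  intro x hx hxD y hyb hy hxy
  exact h.mem_fst_of_adj hx hxD hy (ne_of_mem_of_not_mem hyb hapex) hxy

theorem crosses_snd (h : IsGluing G B₁ B₂ B) (hb : B.Crosses G b) (hapex : B.apex ∉ b) :
    B₂.Crosses G b :=
  (h.flip.crosses_fst hb.flip hapex).flip

theorem connects_apex_fst (h : IsGluing G B₁ B₂ B)
    (hb : Connects G (b ∩ B.carrier) B.left (insert B.apex B.right)) :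
    Connects G (b ∩ B₁.carrier) B₁.left (insert B₁.apex B₁.right) := by
  rw [← h.left_eq]
  refine hb.exits h.left_subset_fst ?_ ?_
  · rintro q (rfl | hq) hq₁
    exacts [(h.apex_notMem_fst hq₁).elim, ((h.right_subset hq).2 hq₁).elim]
  · intro x hx hxD y _ hy hxy
    rw [Set.mem_insert_iff, not_or] at hxD
    exact h.mem_fst_of_adj hx hxD.2 hy (fun hya => hxD.1 (h.eq_apex_fst x hx (hya ▸ hxy))) hxy

theorem forcesApex (h : IsGluing G B₁ B₂ B) (h₁ : B₁.IsRigid G) (h₂ : B₂.IsRigid G) :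
    B.ForcesApex G := by
  intro b c hfar hout hc hb
  by_contra hapex_c
  rw [h.outerL_eq] at hout
  have hc₁ : B₁.Crosses G c := h.crosses_fst hc hapex_c
  have hapex₁ : B₁.apex ∈ c := h₁.1 hfar hout hc₁ (h.connects_apex_fst hb)
  have hapex_b : B.apex ∉ b := fun hmem => hfar.not_adj hmem hapex₁ h.adj_apex_fst.symm
  have hapex₂ : B₂.apex ∉ b := fun hmem =>
    hfar.not_adj_of_adj hmem hapex₁ h.adj_apex_snd h.adj_apex_fst
  have hb' : B.Crosses G b := by
    refine hb.mono (fun _ _ hx => hx) ?_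
    rintro x hx (rfl | hxr)
    exacts [(hapex_b hx.1).elim, hxr]
  have houterR : B₁.outerR ∈ c :=
    h₁.outerR_mem_of_outerL_mem hfar (h.crosses_fst hb' hapex_b) hc₁ hout
  have hb₂ : B₂.Crosses G b := h.crosses_snd hb' hapex_b
  have hinner₂ : B₂.innerL ∉ b := fun hmem => hfar.notMem hmem (h.innerL_snd ▸ houterR)
  have houter₂ : B₂.outerL ∈ b := hb₂.left_mem.resolve_right hinner₂
  exact hapex₂ (h₂.apex_mem_of_outerL_mem hfar.symm (h.crosses_snd hc hapex_c) hb₂ houter₂)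

theorem isRigid (h : IsGluing G B₁ B₂ B) (h₁ : B₁.IsRigid G) (h₂ : B₂.IsRigid G) : B.IsRigid G :=
  ⟨h.forcesApex h₁ h₂, h.flip.forcesApex h₂.flip h₁.flip⟩

end IsGluing

end Block

end Blocks

section Construction

/-- The vertices of the construction: `path j t` is the vertex number `t` on the `j`-th piece of the
bottom path, `leg k s t` is the vertex number `t`, counted upwards, on the left (`s = false`) or
right (`s = true`) leg of the leaf `k` of the tree, and `node h k` is the tree vertex number `k` at
height `h` above the leaves. -/
inductive Vertex
  | path (j t : ℕ)
  | leg (k : ℕ) (s : Bool) (t : ℕ)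
  | node (h k : ℕ)

namespace Vertex

/-- The branch vertices of the bottom path, at which legs are attached. -/
abbrev hub (j : ℕ) : Vertex := path j 0

/-- The edges of the construction, each in one orientation. The legs of the leaf `k` end at
`hub (2 * k)` and `hub (2 * k + 3)`, so that the legs of consecutive leaves are interleaved. -/
inductive Arc (N : ℕ) : Vertex → Vertex → Prop
  | path_step {j t : ℕ} (ht : t < N) : Arc N (path j t) (path j (t + 1))
  | path_next {j : ℕ} : Arc N (path j N) (hub (j + 1))
  | foot_left {k : ℕ} : Arc N (hub (2 * k)) (leg k false 0)
  | foot_right {k : ℕ} : Arc N (hub (2 * k + 3)) (leg k true 0)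
  | leg_step {k t : ℕ} {s : Bool} (ht : t < N) : Arc N (leg k s t) (leg k s (t + 1))
  | leg_top {k : ℕ} {s : Bool} : Arc N (leg k s N) (node 0 k)
  | parent {h k : ℕ} : Arc N (node h k) (node (h + 1) (k / 2))

/-- A binary tree whose leaves are joined by legs of `N + 1` vertices to a bottom path. The tree is
infinite; the construction of depth `d` is the part at or below `node d 0`. The vertices `path j t`
and `leg k s t` with `N < t` are isolated. -/
def graph (N : ℕ) : SimpleGraph Vertex := .fromRel (Arc N)

variable {N h i d : ℕ} {x y : Vertex}

theorem graph_adj : (graph N).Adj x y ↔ Arc N x y ∨ Arc N y x := by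
  have hne : ∀ {x y}, Arc N x y → x ≠ y := fun h => by cases h <;> simp
  exact ⟨And.right, fun h => ⟨h.elim hne fun h' => (hne h').symm, h⟩⟩

theorem Arc.adj (h : Arc N x y) : (graph N).Adj x y :=
  graph_adj.mpr (.inl h)

/-- The vertices at or below `node h i`, with the pieces of the bottom path underneath and the two
hubs that follow these. -/
def InBlock (h i : ℕ) : Vertex → Prop
  | path j t => 2 * (i * 2 ^ h) ≤ j ∧
      (j < 2 * ((i + 1) * 2 ^ h) ∨ j ≤ 2 * ((i + 1) * 2 ^ h) + 1 ∧ t = 0)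
  | leg k _ _ => i * 2 ^ h ≤ k ∧ k < (i + 1) * 2 ^ h
  | node g k => g ≤ h ∧ i * 2 ^ (h - g) ≤ k ∧ k < (i + 1) * 2 ^ (h - g)

/-- The block below `node h i`. -/
def block (h i : ℕ) : Block Vertex where
  carrier := {x | InBlock h i x}
  outerL := hub (2 * (i * 2 ^ h))
  innerL := hub (2 * (i * 2 ^ h) + 1)
  innerR := hub (2 * ((i + 1) * 2 ^ h))
  outerR := hub (2 * ((i + 1) * 2 ^ h) + 1)
  apex := node h i

theorem inBlock_node_self {k : ℕ} : InBlock h i (node h k) ↔ k = i := by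
  simp only [InBlock, Nat.sub_self]
  omega

theorem inBlock_node_parent {g k : ℕ} (hg : g ≠ h) :
    InBlock h i (node (g + 1) (k / 2)) ↔ InBlock h i (node g k) := by
  rcases hg.lt_or_gt with hlt | hgt
  · obtain ⟨n, rfl⟩ := Nat.exists_eq_add_of_lt hlt
    have hsub : g + n + 1 - g = n + 1 := by omega
    have hsub' : g + n + 1 - (g + 1) = n := by omega
    simp only [InBlock, hsub, hsub', pow_succ, ← mul_assoc]
    omega
  · simp only [InBlock]
    omega

theorem forcesApex_block_zero (N i : ℕ) : (block 0 i).ForcesApex (graph N) := by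
  let A : Vertex → Prop
    | path j _ => j = 2 * i
    | leg k s _ => k = i ∧ s = false
    | node _ _ => False
  refine Block.forcesApex_of_exits (A := {x | A x}) ?_ ?_ ?_
  · simp [A, block]
  · rintro x (rfl | rfl) <;> grind [block]
  · rintro x hx y hy hadj
    rcases graph_adj.mp hadj with harc | harc <;> cases harc <;> grind [block, InBlock]

theorem forcesApex_flip_block_zero (N i : ℕ) : (block 0 i).flip.ForcesApex (graph N) := by
  let A : Vertex → Prop
    | path j t => j = 2 * i + 3 ∧ t = 0
    | leg k s _ => k = i ∧ s = true
    | node _ _ => False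
  refine Block.forcesApex_of_exits (A := {x | A x}) ?_ ?_ ?_
  · grind [block, Block.flip]
  · rintro x (rfl | rfl) <;> grind [block, Block.flip]
  · rintro x hx y hy hadj
    rcases graph_adj.mp hadj with harc | harc <;> cases harc <;> grind [block, Block.flip, InBlock]

theorem eq_node_of_adj_node_succ {k : ℕ} (hx : InBlock h i x)
    (hadj : (graph N).Adj x (node (h + 1) k)) : x = node h i := by
  rcases graph_adj.mp hadj with harc | harc <;> cases harc
  · rw [inBlock_node_self.mp hx]
  · exact absurd hx.1 (by omega)

theorem mul_two_pow_succ (i n : ℕ) : i * 2 ^ (n + 1) = 2 * i * 2 ^ n := by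
  ring

theorem mul_two_pow_lt (i n : ℕ) : i * 2 ^ n < (i + 1) * 2 ^ n :=
  Nat.mul_lt_mul_of_pos_right i.lt_succ_self (by positivity)

theorem inBlock_succ : InBlock (h + 1) i x ↔
    x = node (h + 1) i ∨ InBlock h (2 * i) x ∨ InBlock h (2 * i + 1) x := by
  have h₁ := mul_two_pow_lt (2 * i) h
  have h₂ := mul_two_pow_lt (2 * i + 1) h
  cases x with
  | node g k =>
    rcases Nat.lt_trichotomy g (h + 1) with hg | rfl | hg
    · obtain ⟨n, rfl⟩ := Nat.exists_eq_add_of_le (Nat.lt_succ_iff.mp hg)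
      have hsub : g + n + 1 - g = n + 1 := by omega
      have hsub' : g + n - g = n := by omega
      have hlt := mul_two_pow_lt (2 * i) n
      simp only [InBlock, hsub, hsub', mul_two_pow_succ]
      grind
    · simp only [InBlock]; grind
    · grind [InBlock]
  | _ => simp only [InBlock, mul_two_pow_succ]; grind

theorem Arc.inBlock_of_siblings (harc : Arc N x y)
    (hx : InBlock h (2 * i) x ∨ InBlock h (2 * i + 1) x)
    (hy : InBlock h (2 * i) y ∨ InBlock h (2 * i + 1) y) :
    InBlock h (2 * i) x ∧ InBlock h (2 * i) y ∨
      InBlock h (2 * i + 1) x ∧ InBlock h (2 * i + 1) y := by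
  have hlt := mul_two_pow_lt (2 * i) h
  cases harc with
  | @parent g k =>
    have hg : g < h := hy.elim And.left And.left
    rw [inBlock_node_parent hg.ne, inBlock_node_parent hg.ne]
    tauto
  | _ => simp only [InBlock] at *; grind

theorem isGluing_block (N h i : ℕ) :
    Block.IsGluing (graph N) (block h (2 * i)) (block h (2 * i + 1)) (block (h + 1) i) where
  outerL_eq := by simp only [block, mul_two_pow_succ]
  innerL_eq := by simp only [block, mul_two_pow_succ]
  innerR_eq := by simp only [block, mul_two_pow_succ]; rfl
  outerR_eq := by simp only [block, mul_two_pow_succ]; rfl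
  outerL_snd := rfl
  innerL_snd := rfl
  carrier_subset := fun _ hx => inBlock_succ.mp hx
  inter_subset := by
    rintro (_ | _ | _) ⟨h₁, h₂⟩ <;> grind [block, Block.right, InBlock]
  adj_mem := by
    intro x hx y hy hadj
    rcases graph_adj.mp hadj with harc | harc
    · exact harc.inBlock_of_siblings hx hy
    · exact (harc.inBlock_of_siblings hy hx).imp And.symm And.symm
  left_subset := by
    have hlt := mul_two_pow_lt (2 * i) h
    rintro _ (rfl | rfl) <;> grind [block, InBlock, mul_two_pow_succ]
  right_subset := by
    have hlt := mul_two_pow_lt (2 * i + 1) h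
    rintro _ (rfl | rfl) <;> grind [block, InBlock, mul_two_pow_succ]
  apex_notMem_fst := fun hmem => absurd hmem.1 (by omega)
  apex_notMem_snd := fun hmem => absurd hmem.1 (by omega)
  eq_apex_fst := fun x hx hadj => eq_node_of_adj_node_succ hx hadj
  eq_apex_snd := fun x hx hadj => eq_node_of_adj_node_succ hx hadj
  adj_apex_fst := by
    have hparent := (Arc.parent (N := N) (h := h) (k := 2 * i)).adj
    rwa [Nat.mul_div_cancel_left i two_pos] at hparent
  adj_apex_snd := by
    have hparent := (Arc.parent (N := N) (h := h) (k := 2 * i + 1)).adj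
    rwa [show (2 * i + 1) / 2 = i by omega] at hparent

theorem isRigid_block (N h i : ℕ) : (block h i).IsRigid (graph N) := by
  induction h generalizing i with
  | zero => exact ⟨forcesApex_block_zero N i, forcesApex_flip_block_zero N i⟩
  | succ h ih => exact (isGluing_block N h i).isRigid (ih _) (ih _)

/-- The sources: the root and the left terminals of the block below it. -/
def source (d : ℕ) : Set Vertex := insert (node d 0) (block d 0).left

/-- The sinks: the root and the right terminals of the block below it. -/
def sink (d : ℕ) : Set Vertex := insert (node d 0) (block d 0).right

theorem source_subset_block (d : ℕ) : source d ⊆ (block d 0).carrier := by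
  rintro _ (rfl | rfl | rfl)
  · exact inBlock_node_self.mpr rfl
  all_goals grind [block, InBlock]

theorem inBlock_of_adj (hx : InBlock d 0 x) (hx_sink : x ∉ sink d) (hadj : (graph N).Adj x y) :
    InBlock d 0 y := by
  rcases graph_adj.mp hadj with harc | harc <;> cases harc
  case inl.parent g k =>
    refine (inBlock_node_parent ?_).mpr hx
    rintro rfl
    exact hx_sink (.inl (congrArg _ (inBlock_node_self.mp hx)))
  case inr.parent g k => exact (inBlock_node_parent (ne_of_lt hx.1)).mp hx
  all_goals grind [InBlock, sink, block, Block.right]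

theorem crosses_block_of_isSTPath {P : Set Vertex}
    (hP : IsSTPath (graph N) (source d) (sink d) P) (hroot : node d 0 ∉ P) :
    (block d 0).Crosses (graph N) P := by
  obtain ⟨u, v, w, -, hu, hv, rfl⟩ := hP
  have hw : ReachableIn (graph N) {x | x ∈ w.support} u v := ⟨w, fun _ hx => hx⟩
  obtain ⟨r, hr, hreach⟩ := hw.exists_mem_of_exits (source_subset_block d hu) (fun _ => hv)
    fun x hx hx_sink y _ hxy => inBlock_of_adj hx hx_sink hxy
  have hu_left : u ∈ (block d 0).left := by
    rcases hu with rfl | hu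
    exacts [(hroot hreach.left_mem.1).elim, hu]
  have hr_right : r ∈ (block d 0).right := by
    rcases hr with rfl | hr
    exacts [(hroot hreach.right_mem.1).elim, hr]
  exact ⟨u, hu_left, r, hr_right, hreach⟩

theorem not_hasKPaths_three (N d : ℕ) : ¬ HasKPaths (graph N) (source d) (sink d) 3 3 := by
  rintro ⟨P, hP, hfar⟩
  have root_mem {i j : Fin 3} (hij : i ≠ j) : node d 0 ∈ P i ∨ node d 0 ∈ P j := by
    by_contra! hroot
    have hi := crosses_block_of_isSTPath (hP i) hroot.1
    have hj := crosses_block_of_isSTPath (hP j) hroot.2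
    exact ((isRigid_block N d 0).apex_mem_or_apex_mem (hfar i j hij) hi hj).elim hroot.1 hroot.2
  have root_unique {i j : Fin 3} (hij : i ≠ j) (hi : node d 0 ∈ P i) : node d 0 ∉ P j :=
    (hfar i j hij).notMem hi
  have h₀₁ : node d 0 ∈ P 0 ∨ node d 0 ∈ P 1 := root_mem (by decide)
  have h₀₂ : node d 0 ∈ P 0 ∨ node d 0 ∈ P 2 := root_mem (by decide)
  have h₁₂ : node d 0 ∈ P 1 ∨ node d 0 ∈ P 2 := root_mem (by decide)
  rcases h₀₁ with h | h
  · exact h₁₂.elim (root_unique (by decide) h) (root_unique (by decide) h)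
  · exact h₀₂.elim (root_unique (by decide) h) (root_unique (by decide) h)

/-- The distance from the bottom path. -/
def height (N : ℕ) : Vertex → ℤ
  | path _ _ => 0
  | leg _ _ t => t + 1
  | node h _ => N + 2 + h

/-- A function that tells even from odd leaves near the bottom path: it is `-(ℓ + 1)` on the lower
part of the legs of even leaves and `ℓ + 1` on that of odd leaves, vanishes on the tree, and changes
sign along every other piece of the bottom path. -/
def wave (N ℓ : ℕ) : Vertex → ℤ
  | path j t =>
    if j % 4 = 0 then min t (2 * ℓ + 2) - (ℓ + 1)
    else if j % 4 = 1 then ℓ + 1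
    else if j % 4 = 2 then ℓ + 1 - min t (2 * ℓ + 2)
    else -(ℓ + 1)
  | leg k _ t => if k % 2 = 0 then - min (ℓ + 1) (N + 1 - t) else min (ℓ + 1) (N + 1 - t)
  | node _ _ => 0

theorem abs_sub_le_one_of_arc {f : Vertex → ℤ} (hf : ∀ x y, Arc N x y → |f x - f y| ≤ 1)
    (h : (graph N).Adj x y) : |f x - f y| ≤ 1 :=
  (graph_adj.mp h).elim (hf x y) fun h' => abs_sub_comm (f x) (f y) ▸ hf y x h'

theorem abs_height_sub_le (h : (graph N).Adj x y) : |height N x - height N y| ≤ 1 := by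
  refine abs_sub_le_one_of_arc (fun x y harc => ?_) h
  cases harc <;> grind [height]

theorem abs_wave_sub_le {ℓ : ℕ} (hN : 2 * ℓ + 1 ≤ N) (h : (graph N).Adj x y) :
    |wave N ℓ x - wave N ℓ y| ≤ 1 := by
  refine abs_sub_le_one_of_arc (fun x y harc => ?_) h
  cases harc <;> grind [wave]

/-- The bottom path. -/
def bottom : Set Vertex :=
  {x | ∃ j t, x = path j t}

/-- The path through the legs of the leaves `k` with `k % 2 = p`, together with the pieces of the
bottom path that join the right foot of one such leaf to the left foot of the next. -/
def route (N p : ℕ) : Set Vertex :=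
  {x | match x with
    | path j t => j % 4 = (2 * p + 3) % 4 ∨ j % 4 = 2 * p ∧ t = 0
    | leg k _ t => k % 2 = p ∧ t ≤ N
    | node h k => h = 0 ∧ k % 2 = p}

section Routes

variable {X : Set Vertex}

theorem reachableIn_piece {j : ℕ} (hpath : ∀ t, path j t ∈ X) (hnext : hub (j + 1) ∈ X) :
    ReachableIn (graph N) X (hub j) (hub (j + 1)) :=
  have hsteps : ReachableIn (graph N) X (hub j) (path j N) :=
    .iterate (hpath 0) fun t ht => .of_adj (hpath t) (hpath (t + 1)) (Arc.path_step ht).adj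
  hsteps.trans (.of_adj (hpath N) hnext Arc.path_next.adj)

theorem reachableIn_legs {k : ℕ} (hleg : ∀ s, ∀ t ≤ N, leg k s t ∈ X) (hleaf : node 0 k ∈ X)
    (hleft : hub (2 * k) ∈ X) (hright : hub (2 * k + 3) ∈ X) :
    ReachableIn (graph N) X (hub (2 * k)) (hub (2 * k + 3)) := by
  have climb (s : Bool) : ReachableIn (graph N) X (leg k s 0) (node 0 k) :=
    have hsteps : ReachableIn (graph N) X (leg k s 0) (leg k s N) :=
      .iterate (hleg s 0 N.zero_le) fun t ht =>
        .of_adj (hleg s t ht.le) (hleg s (t + 1) ht) (Arc.leg_step ht).adj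
    hsteps.trans (.of_adj (hleg s N le_rfl) hleaf Arc.leg_top.adj)
  have hfoot_left : ReachableIn (graph N) X (hub (2 * k)) (leg k false 0) :=
    .of_adj hleft (hleg false 0 N.zero_le) Arc.foot_left.adj
  have hfoot_right : ReachableIn (graph N) X (hub (2 * k + 3)) (leg k true 0) :=
    .of_adj hright (hleg true 0 N.zero_le) Arc.foot_right.adj
  exact (hfoot_left.trans (climb false)).trans (hfoot_right.trans (climb true)).symm

theorem reachableIn_bottom (N n : ℕ) : ReachableIn (graph N) bottom (hub 0) (hub n) :=
  .iterate (f := hub) ⟨0, 0, rfl⟩ fun j _ =>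
    reachableIn_piece (fun t => ⟨j, t, rfl⟩) ⟨j + 1, 0, rfl⟩

theorem reachableIn_route_zero (N n : ℕ) :
    ReachableIn (graph N) (route N 0) (hub 0) (hub (4 * n)) := by
  refine .iterate (f := fun m => hub (4 * m)) (by simp [route]) fun m _ => ?_
  have hlegs : ReachableIn (graph N) (route N 0) (hub (2 * (2 * m))) (hub (2 * (2 * m) + 3)) := by
    apply reachableIn_legs <;> grind [route]
  have hpiece : ReachableIn (graph N) (route N 0) (hub (4 * m + 3)) (hub (4 * m + 3 + 1)) := by
    apply reachableIn_piece <;> grind [route]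
  rw [← mul_assoc] at hlegs
  exact hlegs.trans hpiece

theorem reachableIn_route_one (N n : ℕ) :
    ReachableIn (graph N) (route N 1) (hub 1) (hub (4 * n + 1)) := by
  refine .iterate (f := fun m => hub (4 * m + 1)) (by simp [route]) fun m _ => ?_
  have hpiece : ReachableIn (graph N) (route N 1) (hub (4 * m + 1)) (hub (4 * m + 1 + 1)) := by
    apply reachableIn_piece <;> grind [route]
  have hlegs : ReachableIn (graph N) (route N 1) (hub (2 * (2 * m + 1)))
      (hub (2 * (2 * m + 1) + 3)) := by
    apply reachableIn_legs <;> grind [route]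
  rw [mul_add, ← mul_assoc] at hlegs
  exact hpiece.trans hlegs

end Routes

theorem height_le_of_mem_route {p : ℕ} (hx : x ∈ route N p) : height N x ≤ N + 2 := by
  cases x <;> grind [route, height]

theorem wave_of_mem_route_zero {ℓ : ℕ} (hN : 3 * ℓ ≤ N + 1) (hx : x ∈ route N 0)
    (hlow : height N x ≤ 2 * ℓ) : wave N ℓ x = -(ℓ + 1) := by
  cases x <;> grind [route, height, wave]

theorem wave_of_mem_route_one {ℓ : ℕ} (hN : 3 * ℓ ≤ N + 1) (hx : x ∈ route N 1)
    (hlow : height N x ≤ 2 * ℓ) : wave N ℓ x = ℓ + 1 := by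
  cases x <;> grind [route, height, wave]

theorem false_of_distLE_bottom_routes {ℓ : ℕ} (hN : 3 * ℓ + 1 ≤ N) {c x₁ x₂ x₃ : Vertex}
    (hx₁ : x₁ ∈ bottom) (hx₂ : x₂ ∈ route N 0) (hx₃ : x₃ ∈ route N 1)
    (hc₁ : DistLE (graph N) c x₁ ℓ) (hc₂ : DistLE (graph N) c x₂ ℓ)
    (hc₃ : DistLE (graph N) c x₃ ℓ) : False := by
  obtain ⟨j, t, rfl⟩ := hx₁
  have hheight {x : Vertex} (hx : DistLE (graph N) c x ℓ) : height N x ≤ 2 * ℓ := by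
    have hle : |height N x - height N (path j t)| ≤ 2 * ℓ :=
      abs_sub_le_two_mul_of_distLE (fun _ _ => abs_height_sub_le) hx hc₁
    rw [height, sub_zero] at hle
    exact (le_abs_self _).trans hle
  have hlipschitz : ∀ x y, (graph N).Adj x y → |wave N ℓ x - wave N ℓ y| ≤ 1 :=
    fun _ _ => abs_wave_sub_le (by lia)
  have hwave : |wave N ℓ x₃ - wave N ℓ x₂| ≤ 2 * ℓ :=
    abs_sub_le_two_mul_of_distLE hlipschitz hc₃ hc₂
  rw [wave_of_mem_route_zero (by lia) hx₂ (hheight hc₂),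
    wave_of_mem_route_one (by lia) hx₃ (hheight hc₃)] at hwave
  have hle := (le_abs_self _).trans hwave
  lia

theorem not_distLE_of_distLE_root {ℓ : ℕ} (hd : 2 * ℓ < d) {c : Vertex}
    (hc : DistLE (graph N) c (node d 0) ℓ) (hx : height N x ≤ N + 2) :
    ¬ DistLE (graph N) c x ℓ := by
  intro hcx
  have hle : height N (node d 0) - height N x ≤ 2 * ℓ :=
    (le_abs_self _).trans (abs_sub_le_two_mul_of_distLE (fun _ _ => abs_height_sub_le) hc hcx)
  have hroot : height N (node d 0) = N + 2 + d := rfl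
  lia

theorem not_coarseSeparator_two {ℓ : ℕ} (hN : 3 * ℓ + 1 ≤ N) (hd : 2 * ℓ < d) :
    ¬ CoarseSeparator (graph N) (source d) (sink d) 2 ℓ := by
  intro hsep
  obtain ⟨C, hC, hit⟩ := hsep.exists_distLE
  obtain ⟨n, hn⟩ : ∃ n, 2 * ((0 + 1) * 2 ^ d) = 4 * n := by
    obtain ⟨e, rfl⟩ : ∃ e, d = e + 1 := ⟨d - 1, by lia⟩
    exact ⟨2 ^ e, by ring⟩
  have hsource : hub 0 ∈ source d ∧ hub 1 ∈ source d := by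
    simp [source, block, Block.left]
  have hsink : hub (4 * n) ∈ sink d ∧ hub (4 * n + 1) ∈ sink d := by
    simp [sink, block, Block.right, ← hn]
  obtain ⟨c₀, hc₀, _, rfl, hroot⟩ := hit {node d 0} _ _ (.inl rfl) (.inl rfl) (.refl rfl)
  obtain ⟨c₁, hc₁, x₁, hx₁, h₁⟩ := hit bottom _ _ hsource.1 hsink.1 (reachableIn_bottom N _)
  obtain ⟨c₂, hc₂, x₂, hx₂, h₂⟩ := hit _ _ _ hsource.1 hsink.1 (reachableIn_route_zero N n)
  obtain ⟨c₃, hc₃, x₃, hx₃, h₃⟩ := hit _ _ _ hsource.2 hsink.2 (reachableIn_route_one N n)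
  have far {c x : Vertex} (hx : height N x ≤ N + 2) (hcx : DistLE (graph N) c x ℓ) : c ≠ c₀ :=
    fun hc => not_distLE_of_distLE_root hd hroot hx (hc ▸ hcx)
  have hx₁_height : height N x₁ ≤ N + 2 := by
    obtain ⟨j, t, rfl⟩ := hx₁
    simp only [height]
    lia
  have hne₁ : c₁ ≠ c₀ := far hx₁_height h₁
  have eq_c₁ {c : Vertex} (hc : c ∈ C) (hne : c ≠ c₀) : c = c₁ := by
    by_contra hne'
    exact hC.not_gt <| Finset.two_lt_card.mpr
      ⟨c₀, hc₀, c₁, hc₁, c, hc, hne₁.symm, hne.symm, Ne.symm hne'⟩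
  obtain rfl : c₂ = c₁ := eq_c₁ hc₂ (far (height_le_of_mem_route hx₂) h₂)
  obtain rfl : c₃ = c₂ := eq_c₁ hc₃ (far (height_le_of_mem_route hx₃) h₃)
  exact false_of_distLE_bottom_routes hN hx₁ hx₂ hx₃ h₁ h₂ h₃

end Vertex

end Construction

end CoarseMenger

/-- Lower bound `n ≥ ⌊3k/2⌋` for the relaxed coarse Menger conjecture: for every `r ≥ 1`
and `ℓ > 0` there is a graph with no `2r+1` pairwise-3-distant `S`–`T` paths, in which
no `3r-1` balls of radius `ℓ` separate `S` from `T`. -/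
theorem stmt_15 (r ℓ : ℕ) (hr : 1 ≤ r) (hl : 0 < ℓ) :
    ∃ (V : Type) (G : SimpleGraph V) (S T : Set V),
      ¬ HasKPaths G S T (2 * r + 1) 3 ∧
      ∀ X : Finset V, X.card ≤ 3 * r - 1 →
        ∃ (u v : V) (w : G.Walk u v), w.IsPath ∧ u ∈ S ∧ v ∈ T ∧
          ∀ x ∈ X, ∀ y ∈ w.support, ¬ DistLE G x y ℓ := by
  refine ⟨Fin r × CoarseMenger.Vertex,
    CoarseMenger.copies (Fin r) (CoarseMenger.Vertex.graph (3 * ℓ + 1)),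
    Set.univ ×ˢ CoarseMenger.Vertex.source (2 * ℓ + 1),
    Set.univ ×ˢ CoarseMenger.Vertex.sink (2 * ℓ + 1), fun hpaths => ?_, fun X hX => ?_⟩
  · refine CoarseMenger.Vertex.not_hasKPaths_three _ _ (hpaths.of_copies (m := 2) ?_)
    rw [Fintype.card_fin]
    lia
  · by_contra! hsep
    have hseparator : CoarseSeparator _ _ _ (3 * r - 1) ℓ :=
      ⟨X, hX, fun u v w hw hu hv =>
        let ⟨x, hx, y, hy, hxy⟩ := hsep u v w hw hu hv
        ⟨y, hy, x, hx, hxy⟩⟩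
    refine CoarseMenger.Vertex.not_coarseSeparator_two le_rfl (Nat.lt_succ_self (2 * ℓ))
      (hseparator.of_copies ?_)
    rw [Fintype.card_fin]
    lia
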